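/- Among the total degrees of vertices of all Fibonacci graphs on words of length n, the proportion of vertices of degree 3 tends to (4 + √5)/11 as n → ∞; that is, lim_{n→∞} ( Σ_{w ∈ F_{n,2}} deg₃(w) ) / ( Σ_{w ∈ F_{n,2}} ver(w) ) = (4 + √5)/11. -/

import Mathlib

open Finset Filter

/-- Number of `1`s in a binary word. -/
def wOnes (w : List Bool) : ℕ := w.count true

/-- Indicator of `w₁ = c` (first letter). -/
def indHead (c : Bool) (w : List Bool) : ℕ := if w.head? = some c then 1 else 0

/-- Indicator of `wₙ = c` (last letter). -/
def indLast (c : Bool) (w : List Bool) : ℕ := if w.getLast? = some c then 1 else 0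

/-- The set `F_{n,2}` of binary words of length `n` avoiding two consecutive `1`s. -/
def kbonWords (n k : ℕ) : Finset (Fin n → Bool) :=
  Finset.univ.filter (fun w => ¬ (List.replicate k true <:+: List.ofFn w))

/-- Number of vertices of the Fibonacci graph of `w`: `ver(w) = 2n + 2 + 2s(w)`. -/
def wVer (n : ℕ) (w : List Bool) : ℕ := 2 * n + 2 + 2 * wOnes w

/-- Number of degree-2 vertices: `deg₂(w) = 2 + 2s(w) + [w₁ = 0] + [wₙ = 0]`. -/
def wDeg2 (w : List Bool) : ℕ := 2 + 2 * wOnes w + indHead false w + indLast false w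

/-- Number of degree-4 vertices: `deg₄(w) = 2s(w) − [w₁ = 1] − [wₙ = 1]`. -/
def wDeg4 (w : List Bool) : ℕ := 2 * wOnes w - indHead true w - indLast true w

/-- Number of degree-3 vertices: `deg₃(w) = ver(w) − deg₂(w) − deg₄(w)`. -/
def wDeg3 (n : ℕ) (w : List Bool) : ℕ := wVer n w - wDeg2 w - wDeg4 w

/-!
A word of `F_{n+2,2}` is either `0` followed by a word of `F_{n+1,2}` or `10` followed by a word of
`F_{n,2}`. This gives linear recurrences for the number of words, which is the Fibonacci number
`F_{n+2}`, and for the total number of `1`s, so that the average number of `1`s per letter tends to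
a limit `ρ = (5 - √5) / 10`. Since `ver(w)` and `deg₃(w)` differ by at most `2` from `2n + 2s(w)`
and `2n - 2s(w)`, the proportion tends to `(2 - 2ρ) / (2 + 2ρ)`.
-/

open Real Topology
open scoped BigOperators

theorem sum_ofFn_succ {α M : Type*} [Fintype α] [AddCommMonoid M] (n : ℕ) (f : List α → M) :
    ∑ w : Fin (n + 1) → α, f (List.ofFn w) = ∑ a, ∑ w : Fin n → α, f (a :: List.ofFn w) := by
  rw [← (Fin.consEquiv fun _ ↦ α).sum_comp, Fintype.sum_prod_type]
  simp [Fin.consEquiv]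

theorem sum_kbonWords {M : Type*} [AddCommMonoid M] (n k : ℕ) (f : List Bool → M) :
    ∑ w ∈ kbonWords n k, f (List.ofFn w) =
      ∑ w : Fin n → Bool,
        if List.replicate k true <:+: List.ofFn w then 0 else f (List.ofFn w) := by
  simp only [kbonWords, sum_filter, ite_not]

theorem sum_kbonWords_two_add_two {M : Type*} [AddCommMonoid M] (n : ℕ) (f : List Bool → M) :
    ∑ w ∈ kbonWords (n + 2) 2, f (List.ofFn w) =
      ∑ w ∈ kbonWords (n + 1) 2, f (false :: List.ofFn w) +
        ∑ w ∈ kbonWords n 2, f (true :: false :: List.ofFn w) := by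
  let avoiding (l : List Bool) : M := if List.replicate 2 true <:+: l then 0 else f l
  have avoiding_false (l : List Bool) :
      avoiding (false :: l) = if List.replicate 2 true <:+: l then 0 else f (false :: l) := by
    simp [avoiding, List.infix_cons_iff, List.replicate_succ]
  have avoiding_true_true (l : List Bool) : avoiding (true :: true :: l) = 0 := by
    simp [avoiding, List.infix_cons_iff, List.replicate_succ]
  have avoiding_true_false (l : List Bool) :
      avoiding (true :: false :: l) =
        if List.replicate 2 true <:+: l then 0 else f (true :: false :: l) := by
    simp [avoiding, List.infix_cons_iff, List.replicate_succ]
  calc ∑ w ∈ kbonWords (n + 2) 2, f (List.ofFn w)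
      = ∑ w : Fin (n + 2) → Bool, avoiding (List.ofFn w) := sum_kbonWords ..
    _ = ∑ w : Fin (n + 1) → Bool, avoiding (false :: List.ofFn w) +
          ∑ w : Fin n → Bool, avoiding (true :: false :: List.ofFn w) := by
      rw [sum_ofFn_succ, Fintype.sum_bool, sum_ofFn_succ n fun l ↦ avoiding (true :: l),
        Fintype.sum_bool]
      simp only [avoiding_true_true, sum_const_zero, zero_add, add_comm]
    _ = _ := by
      simp only [avoiding_false, avoiding_true_false]
      rw [sum_kbonWords _ _ fun l ↦ f (false :: l),
        sum_kbonWords _ _ fun l ↦ f (true :: false :: l)]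

theorem card_kbonWords_two (n : ℕ) : #(kbonWords n 2) = Nat.fib (n + 2) := by
  induction n using Nat.twoStepInduction with
  | zero => decide
  | one => decide
  | more n ih₀ ih₁ =>
    have h := sum_kbonWords_two_add_two n fun _ ↦ 1
    simp only [← card_eq_sum_ones, ih₀, ih₁] at h
    rw [h, Nat.fib_add_two (n := n + 2), add_comm]

theorem kbonWords_two_nonempty (n : ℕ) : (kbonWords n 2).Nonempty := by
  rw [← card_pos, card_kbonWords_two, Nat.fib_pos]
  positivity

theorem wOnes_false_cons (l : List Bool) : wOnes (false :: l) = wOnes l := by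
  simp [wOnes]

theorem wOnes_true_cons (l : List Bool) : wOnes (true :: l) = wOnes l + 1 := by
  simp [wOnes]

theorem wOnes_le_length (l : List Bool) : wOnes l ≤ l.length :=
  List.count_le_length

theorem five_mul_sum_wOnes_kbonWords_two (n : ℕ) :
    5 * ∑ w ∈ kbonWords n 2, wOnes (List.ofFn w) =
      2 * (n + 1) * Nat.fib n + n * Nat.fib (n + 1) := by
  induction n using Nat.twoStepInduction with
  | zero => decide
  | one => decide
  | more n ih₀ ih₁ =>
    rw [sum_kbonWords_two_add_two]
    simp only [wOnes_false_cons, wOnes_true_cons, sum_add_distrib, ← card_eq_sum_ones,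
      card_kbonWords_two, mul_add, ih₀, ih₁, Nat.fib_add_two]
    ring

theorem tendsto_fib_div_fib_add_two_atTop :
    Tendsto (fun n ↦ (Nat.fib n / Nat.fib (n + 2) : ℝ)) atTop (𝓝 (1 + goldenConj)) := by
  have hratio : Tendsto (fun n ↦ (Nat.fib (n + 1) / Nat.fib (n + 2) : ℝ)) atTop (𝓝 (-goldenConj)) :=
    tendsto_fib_div_fib_succ_atTop.comp (tendsto_add_atTop_nat 1)
  rw [← sub_neg_eq_add]
  refine (hratio.const_sub 1).congr fun n ↦ ?_
  have hfib : (Nat.fib (n + 2) : ℝ) ≠ 0 := by simp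
  rw [one_sub_div hfib, Nat.fib_add_two, Nat.cast_add, add_sub_cancel_right]

theorem tendsto_expect_wOnes_div :
    Tendsto (fun n : ℕ ↦ (𝔼 w ∈ kbonWords n 2, (wOnes (List.ofFn w) : ℝ)) / n) atTop
      (𝓝 ((5 - √5) / 10)) := by
  have hinv : Tendsto (fun n : ℕ ↦ 1 + 1 / (n : ℝ)) atTop (𝓝 (1 + 0)) :=
    tendsto_one_div_atTop_nhds_zero_nat.const_add 1
  have hratio := tendsto_fib_div_fib_add_two_atTop
  have hlim := (((hinv.const_mul 2).mul hratio).add (hratio.const_sub 1)).div_const 5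
  have hvalue : (2 * (1 + 0) * (1 + goldenConj) + (1 - (1 + goldenConj))) / 5 = (5 - √5) / 10 := by
    rw [goldenConj]
    ring
  rw [hvalue] at hlim
  refine hlim.congr' ?_
  filter_upwards [eventually_ne_atTop 0] with n hn
  have hsum : 5 * ∑ w ∈ kbonWords n 2, (wOnes (List.ofFn w) : ℝ) =
      2 * (n + 1) * Nat.fib n + n * Nat.fib (n + 1) :=
    mod_cast five_mul_sum_wOnes_kbonWords_two n
  have hrec : (Nat.fib (n + 2) : ℝ) = Nat.fib n + Nat.fib (n + 1) := mod_cast Nat.fib_add_two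
  have hfib : (Nat.fib (n + 2) : ℝ) ≠ 0 := by simp
  rw [expect_eq_sum_div_card, card_kbonWords_two]
  field_simp
  linear_combination (n : ℝ) * hrec - hsum

theorem tendsto_expect_div_of_abs_sub_le {ι : ℕ → Type*} {s : ∀ n, Finset (ι n)}
    {f g : ∀ n, ι n → ℝ} {a b C ρ : ℝ} (hs : ∀ n, (s n).Nonempty)
    (hf : ∀ n, ∀ i ∈ s n, |f n i - (a * n + b * g n i)| ≤ C)
    (hg : Tendsto (fun n : ℕ ↦ (𝔼 i ∈ s n, g n i) / n) atTop (𝓝 ρ)) :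
    Tendsto (fun n : ℕ ↦ (𝔼 i ∈ s n, f n i) / n) atTop (𝓝 (a + b * ρ)) := by
  have herror : Tendsto (fun n : ℕ ↦ (𝔼 i ∈ s n, (f n i - (a * n + b * g n i))) / n) atTop
      (𝓝 0) := by
    refine squeeze_zero_norm (fun n ↦ ?_) (tendsto_const_div_atTop_nhds_zero_nat C)
    rw [norm_eq_abs, abs_div, Nat.abs_cast]
    gcongr
    exact (abs_expect_le _ _).trans (expect_le (hs n) (hf n))
  have hlim := herror.add ((hg.const_mul b).const_add a)
  rw [zero_add] at hlim
  refine hlim.congr' ?_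
  filter_upwards [eventually_ne_atTop 0] with n hn
  rw [expect_sub_distrib, expect_add_distrib, expect_const (hs n), ← mul_expect]
  field_simp
  ring

theorem abs_wVer_sub_le (n : ℕ) (l : List Bool) :
    |(wVer n l : ℝ) - (2 * n + 2 * wOnes l)| ≤ 2 := by
  have hdiff : (wVer n l : ℝ) - (2 * n + 2 * wOnes l) = 2 := by
    push_cast [wVer]
    ring
  rw [hdiff, abs_two]

theorem indHead_le_one (c : Bool) (l : List Bool) : indHead c l ≤ 1 := by
  unfold indHead
  split <;> simp

theorem indLast_le_one (c : Bool) (l : List Bool) : indLast c l ≤ 1 := by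
  unfold indLast
  split <;> simp

theorem abs_wDeg3_sub_le {n : ℕ} {l : List Bool} (hl : wOnes l ≤ n) :
    |(wDeg3 n l : ℝ) - (2 * n + -2 * wOnes l)| ≤ 2 := by
  have hhead (c : Bool) := indHead_le_one c l
  have hlast (c : Bool) := indLast_le_one c l
  have hupper : wDeg3 n l + 2 * wOnes l ≤ 2 * n + 2 := by
    grind [wDeg3, wDeg2, wDeg4, wVer]
  have hlower : 2 * n ≤ wDeg3 n l + 2 * wOnes l + 2 := by
    grind [wDeg3, wDeg2, wDeg4, wVer]
  rify at hupper hlower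
  rw [abs_le]
  constructor <;> linarith

theorem degree3_proportion :
    Tendsto
      (fun n : ℕ =>
        ((∑ w ∈ kbonWords n 2, (wDeg3 n (List.ofFn w) : ℝ)) /
          (∑ w ∈ kbonWords n 2, (wVer n (List.ofFn w) : ℝ))))
      atTop (nhds ((4 + Real.sqrt 5) / 11)) := by
  have hones (n : ℕ) (w : Fin n → Bool) : wOnes (List.ofFn w) ≤ n := by
    simpa using wOnes_le_length (List.ofFn w)
  have hdeg3 := tendsto_expect_div_of_abs_sub_le kbonWords_two_nonempty
    (fun n w _ ↦ abs_wDeg3_sub_le (hones n w)) tendsto_expect_wOnes_div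
  have hver := tendsto_expect_div_of_abs_sub_le kbonWords_two_nonempty
    (fun n w _ ↦ abs_wVer_sub_le n (List.ofFn w)) tendsto_expect_wOnes_div
  have hsqrt : √5 ^ 2 = 5 := sq_sqrt (by norm_num)
  have hpos : 0 < 2 + 2 * ((5 - √5) / 10) := by nlinarith
  have hvalue : (2 + -2 * ((5 - √5) / 10)) / (2 + 2 * ((5 - √5) / 10)) = (4 + √5) / 11 := by
    rw [div_eq_div_iff hpos.ne' (by norm_num)]
    linear_combination (1 / 5) * hsqrt
  rw [← hvalue]
  refine (hdeg3.div hver hpos.ne').congr' ?_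
  filter_upwards [eventually_ne_atTop 0] with n hn
  have hcard : (#(kbonWords n 2) : ℝ) ≠ 0 := mod_cast (kbonWords_two_nonempty n).card_ne_zero
  rw [Pi.div_apply, div_div_div_cancel_right₀ (mod_cast hn), expect_eq_sum_div_card,
    expect_eq_sum_div_card, div_div_div_cancel_right₀ hcard]
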